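/- Let U ⊆ ℝ be an open set, let m ∈ ℝ, and let σ : ℝ → ℝ be four times differentiable on U with σ'(y) ≠ 0 for all y ∈ U. Define p(y) = (1/2) σ''(y)/σ'(y) and W(y) = (1/2) σ'''(y)/σ'(y) - (3/4) (σ''(y)/σ'(y))². Then p satisfies the Painlevé-II equation p''(y) - 2 p(y)³ - (2/3) y p(y) + (2/3) m = 0 for all y ∈ U if and only if W'(y) + (σ''(y)/σ'(y)) W(y) - (1/3) (σ''(y)/σ'(y)) y + (2/3) m = 0 for all y ∈ U. -/

import Mathlib

/-- If `p = (1/2) σ''/σ'` and `W = (1/2) σ'''/σ' - (3/4)(σ''/σ')²` (half the Schwarzian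
derivative of `σ`), then `p` satisfies the Painlevé-II equation with parameter `m` on `U`
if and only if `W' + (σ''/σ') W - (1/3)(σ''/σ') y + (2/3) m = 0` on `U`. -/
theorem painleveII_iff_schwarzian_form (U : Set ℝ) (hU : IsOpen U) (m : ℝ) (σ : ℝ → ℝ)
    (h1 : ∀ y ∈ U, DifferentiableAt ℝ σ y)
    (h2 : ∀ y ∈ U, DifferentiableAt ℝ (deriv σ) y)
    (h3 : ∀ y ∈ U, DifferentiableAt ℝ (deriv (deriv σ)) y)
    (h4 : ∀ y ∈ U, DifferentiableAt ℝ (deriv (deriv (deriv σ))) y)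
    (hσ' : ∀ y ∈ U, deriv σ y ≠ 0) :
    (∀ y ∈ U,
        deriv (deriv (fun t => (1 / 2) * deriv (deriv σ) t / deriv σ t)) y -
            2 * ((1 / 2) * deriv (deriv σ) y / deriv σ y) ^ 3 -
            (2 / 3) * y * ((1 / 2) * deriv (deriv σ) y / deriv σ y) + (2 / 3) * m = 0) ↔
      (∀ y ∈ U,
        deriv (fun t => (1 / 2) * deriv (deriv (deriv σ)) t / deriv σ t -
            (3 / 4) * (deriv (deriv σ) t / deriv σ t) ^ 2) y +
          (deriv (deriv σ) y / deriv σ y) *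
            ((1 / 2) * deriv (deriv (deriv σ)) y / deriv σ y -
              (3 / 4) * (deriv (deriv σ) y / deriv σ y) ^ 2) -
          (1 / 3) * (deriv (deriv σ) y / deriv σ y) * y + (2 / 3) * m = 0) := by
  have key : ∀ y ∈ U, HasDerivAt (fun t => deriv (deriv σ) t / deriv σ t)
      ((deriv (deriv (deriv σ)) y * deriv σ y - deriv (deriv σ) y * deriv (deriv σ) y)
        / deriv σ y ^ 2) y := fun y hy =>
    (h3 y hy).hasDerivAt.div (h2 y hy).hasDerivAt (hσ' y hy)
  have hp : ∀ y ∈ U, deriv (fun t => (1 / 2) * deriv (deriv σ) t / deriv σ t) y =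
      ((1 / 2) * deriv (deriv (deriv σ)) y / deriv σ y -
            (3 / 4) * (deriv (deriv σ) y / deriv σ y) ^ 2) +
        (1 / 4) * (deriv (deriv σ) y / deriv σ y) ^ 2 := by
    intro y hy
    have h0 := hσ' y hy
    have h := (key y hy).const_mul (1 / 2 : ℝ)
    simp only [mul_div_assoc]
    rw [h.deriv]
    field_simp
    ring
  refine forall₂_congr fun y hy => ?_
  have h0 := hσ' y hy
  have hW : DifferentiableAt ℝ (fun t => (1 / 2) * deriv (deriv (deriv σ)) t / deriv σ t -
            (3 / 4) * (deriv (deriv σ) t / deriv σ t) ^ 2) y :=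
    (((h4 y hy).const_mul (1 / 2)).div (h2 y hy) h0).sub
      (((key y hy).differentiableAt.pow 2).const_mul (3 / 4))
  have hev := Filter.eventuallyEq_of_mem (hU.mem_nhds hy) hp
  have hd := hW.hasDerivAt.add (((key y hy).pow 2).const_mul (1 / 4 : ℝ))
  have e := hev.deriv_eq.trans hd.deriv
  rw [e]
  generalize deriv (fun t => (1 / 2) * deriv (deriv (deriv σ)) t / deriv σ t -
            (3 / 4) * (deriv (deriv σ) t / deriv σ t) ^ 2) y = w
  generalize deriv (deriv (deriv σ)) y = c
  generalize deriv (deriv σ) y = b at *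
  generalize deriv σ y = a at *
  refine Eq.congr ?_ rfl
  push_cast
  field_simp
  ring
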